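/- Let m ≥ 4 and let c, d be nonzero elements of F_{2^m}. Then there exist x₀, x₁ ∈ F_{2^m} \ {0, c} such that Tr_1^m(d·(x₀⁻¹ + (x₀ + c)⁻¹)) = 0 and Tr_1^m(d·(x₁⁻¹ + (x₁ + c)⁻¹)) = 1; in particular the function x ↦ Tr_1^m(d·(x⁻¹ + (x+c)⁻¹)) does not vanish identically on F_{2^m} \ {0, c}. -/

import Mathlib

/-- The absolute trace map of `F_{2^m}`. -/
noncomputable def Tr (m : ℕ) (x : GaloisField 2 m) : ZMod 2 :=
  Algebra.trace (ZMod 2) (GaloisField 2 m) x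

theorem aux_sq (m : ℕ) (x : GaloisField 2 m) : Tr m (x ^ 2) = Tr m x := by
  have h := Algebra.trace_eq_of_algEquiv
    (FiniteField.frobeniusAlgEquivOfAlgebraic (ZMod 2) (GaloisField 2 m)) x
  simpa [Tr, ZMod.card] using h

theorem aux_add (m : ℕ) (x y : GaloisField 2 m) : Tr m (x + y) = Tr m x + Tr m y := by
  simp [Tr]

theorem aux_surj (m : ℕ) :
    Function.Surjective (Algebra.trace (ZMod 2) (GaloisField 2 m)) :=
  Algebra.trace_surjective _ _

theorem aux_ker (m : ℕ) (hm : 4 ≤ m) :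
    Module.finrank (ZMod 2) (Algebra.trace (ZMod 2) (GaloisField 2 m)).ker = m - 1 := by
  have h := LinearMap.finrank_range_add_finrank_ker (Algebra.trace (ZMod 2) (GaloisField 2 m))
  rw [LinearMap.range_eq_top.2 (aux_surj m), finrank_top, Module.finrank_self,
    GaloisField.finrank 2 (by omega)] at h
  omega

theorem aux_as (m : ℕ) (hm : 4 ≤ m) (u : GaloisField 2 m) (hu : Tr m u = 0) :
    ∃ t, t ^ 2 + t = u := by
  let L : GaloisField 2 m →ₗ[ZMod 2] GaloisField 2 m :=
    (FiniteField.frobeniusAlgEquivOfAlgebraic (ZMod 2) (GaloisField 2 m)).toLinearMap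
      + LinearMap.id
  have hL : ∀ t, L t = t ^ 2 + t := by intro t; simp [L, ZMod.card]
  have h1 : L.ker = Submodule.span (ZMod 2) {1} := by
    ext t
    rw [LinearMap.mem_ker, hL, Submodule.mem_span_singleton]
    constructor
    · intro h
      have : t * (t + 1) = 0 := by linear_combination h
      rcases mul_eq_zero.1 this with h | h
      · exact ⟨0, by simp [h]⟩
      · exact ⟨1, by rw [one_smul]; exact (CharTwo.add_eq_zero.1 h).symm⟩
    · rintro ⟨a, rfl⟩
      have : a = 0 ∨ a = 1 := by revert a; decide
      rcases this with h | h <;> simp [h, CharTwo.add_self_eq_zero]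
  have h2 := LinearMap.finrank_range_add_finrank_ker L
  rw [h1, finrank_span_singleton one_ne_zero, GaloisField.finrank 2 (by omega)] at h2
  have h3 : L.range ≤ (Algebra.trace (ZMod 2) (GaloisField 2 m)).ker := by
    rintro _ ⟨t, rfl⟩
    rw [hL, LinearMap.mem_ker]
    change Tr m _ = 0
    rw [aux_add, aux_sq, CharTwo.add_self_eq_zero]
  have h4 := Submodule.eq_of_le_of_finrank_eq h3 (by rw [aux_ker m hm]; omega)
  have : u ∈ L.range := by rw [h4]; exact hu
  obtain ⟨t, ht⟩ := this
  exact ⟨t, by rw [← hL, ht]⟩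

theorem aux_ex (m : ℕ) (hm : 4 ≤ m) (p q r s : GaloisField 2 m) :
    ∃ a, Tr m a = 0 ∧ a ≠ p ∧ a ≠ q ∧ a ≠ r ∧ a ≠ s := by
  classical
  by_contra! hcon
  have hsub : ((Algebra.trace (ZMod 2) (GaloisField 2 m)).ker : Set (GaloisField 2 m)) ⊆
      (({p, q, r, s} : Finset (GaloisField 2 m)) : Set (GaloisField 2 m)) := by
    intro a ha
    have := hcon a ha
    simp only [Finset.coe_insert, Finset.coe_singleton, Set.mem_insert_iff, Set.mem_singleton_iff]
    tauto
  have h1 := Set.ncard_le_ncard hsub (Finset.finite_toSet _)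
  rw [Set.ncard_coe_finset] at h1
  have h2 := h1.trans Finset.card_le_four
  have h3 := Module.natCard_eq_pow_finrank (K := ZMod 2)
    (V := (Algebra.trace (ZMod 2) (GaloisField 2 m)).ker)
  rw [aux_ker m hm, Nat.card_zmod] at h3
  have h4 : 2 ^ 3 ≤ 2 ^ (m - 1) := Nat.pow_le_pow_right (by norm_num) (by omega)
  have h5 : Nat.card (Algebra.trace (ZMod 2) (GaloisField 2 m)).ker ≤ 4 := h2
  omega

theorem aux_nd (m : ℕ) (r : GaloisField 2 m)
    (h : ∀ a, Tr m a = 0 → Tr m (a * r) = 0) : r = 0 ∨ r = 1 := by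
  obtain ⟨w, hw⟩ := aux_surj m 1
  have hw : Tr m w = 1 := hw
  have key : ∀ k : GaloisField 2 m, (∀ x, Tr m (x * k) = 0) → k = 0 := by
    intro k hk
    by_contra hk0
    have := hk (w * k⁻¹)
    rw [mul_assoc, inv_mul_cancel₀ hk0, mul_one, hw] at this
    exact one_ne_zero this
  have z : ∀ y : ZMod 2, y = 0 ∨ y = 1 := by decide
  have two : (1 : ZMod 2) + 1 = 0 := by decide
  rcases z (Tr m (w * r)) with h0 | h1
  · left
    apply key
    intro x
    rcases z (Tr m x) with hx | hx
    · exact h x hx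
    · have := h (x + w) (by rw [aux_add, hx, hw, two])
      rwa [add_mul, aux_add, h0, add_zero] at this
  · right
    apply CharTwo.add_eq_zero.1
    apply key
    intro x
    rw [mul_add, mul_one, aux_add]
    rcases z (Tr m x) with hx | hx
    · rw [h x hx, hx, add_zero]
    · have := h (x + w) (by rw [aux_add, hx, hw, two])
      rwa [add_mul, aux_add, h1, ← hx] at this

theorem aux_main (m : ℕ) (e : GaloisField 2 m) (he : e ≠ 0) (j : ZMod 2)
    (h : ∀ u, u ≠ 0 → Tr m u = 0 → Tr m (e / u) = j) (a s : GaloisField 2 m)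
    (hs : s ≠ 0) (ha : a ≠ 0) (has : a ≠ s) (hTs : Tr m s = 0) (hTa : Tr m a = 0) :
    Tr m (a ^ 2 / s) = j := by
  have hb : a + s ≠ 0 := fun h => has (CharTwo.add_eq_zero.1 h)
  have h1 := h a ha hTa
  have h2 := h (a + s) hb (by rw [aux_add, hTa, hTs, add_zero])
  have h3 : e / a + e / (a + s) = e * s / (a * (a + s)) := by
    have : (a + s) + a = s := by
      rw [add_comm, ← add_assoc, CharTwo.add_self_eq_zero, zero_add]
    field_simp
    rw [this]
  have h4 := h (e * s / (a * (a + s)))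
    (div_ne_zero (mul_ne_zero he hs) (mul_ne_zero ha hb))
    (by rw [← h3, aux_add, h1, h2, CharTwo.add_self_eq_zero])
  have h5 : e / (e * s / (a * (a + s))) = a ^ 2 / s + a := by
    field_simp
  rwa [h5, aux_add, hTa, add_zero] at h4

theorem aux_red (m : ℕ) (hm : 4 ≤ m) (c d : GaloisField 2 m) (hc : c ≠ 0) (j : ZMod 2)
    (h : ∀ x, x ≠ 0 → x ≠ c → Tr m (d * (x⁻¹ + (x + c)⁻¹)) = j) :
    ∀ u, u ≠ 0 → Tr m u = 0 → Tr m ((d / c) / u) = j := by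
  intro u hu hTu
  obtain ⟨t, rfl⟩ := aux_as m hm u hTu
  have ht : t ≠ 0 := by rintro rfl; simp at hu
  have ht1 : t + 1 ≠ 0 := by
    intro h; apply hu; linear_combination t * h
  have := h (c * t) (mul_ne_zero hc ht) (by
    intro h
    have : t = 1 := mul_left_cancel₀ hc (by rw [h, mul_one])
    rw [this] at ht1
    exact ht1 (CharTwo.add_self_eq_zero 1))
  rw [← this]
  congr 1
  have e1 : c * t + c = c * (t + 1) := by ring
  have e2 : t ^ 2 + t = t * (t + 1) := by ring
  have e3 : (t + 1) + t = 1 := by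
    rw [add_comm, ← add_assoc, CharTwo.add_self_eq_zero, zero_add]
  rw [e1, e2]
  field_simp
  rw [e3, mul_one]

/-- Lemma 3.7: for `m ≥ 4` and nonzero `c, d ∈ F_{2^m}`, the function
`x ↦ Tr(d (x⁻¹ + (x+c)⁻¹))` takes both values `0` and `1` on `F_{2^m} \ {0, c}`;
in particular it does not vanish identically there. -/
theorem trace_inverse_sum_not_identically_zero
    (m : ℕ) (hm : 4 ≤ m) (c d : GaloisField 2 m) (hc : c ≠ 0) (hd : d ≠ 0) :
    ∃ x₀ x₁ : GaloisField 2 m,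
      x₀ ≠ 0 ∧ x₀ ≠ c ∧ x₁ ≠ 0 ∧ x₁ ≠ c ∧
      Tr m (d * (x₀⁻¹ + (x₀ + c)⁻¹)) = 0 ∧
      Tr m (d * (x₁⁻¹ + (x₁ + c)⁻¹)) = 1 := by
  have z : ∀ y : ZMod 2, y = 0 ∨ y = 1 := by decide
  have he : d / c ≠ 0 := div_ne_zero hd hc
  have A : ∃ x, x ≠ 0 ∧ x ≠ c ∧ Tr m (d * (x⁻¹ + (x + c)⁻¹)) = 0 := by
    by_contra hcon
    have h := aux_main m _ he 1 (aux_red m hm c d hc 1 (fun x h0 h1 =>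
      (z _).resolve_left (fun h2 => hcon ⟨x, h0, h1, h2⟩)))
    obtain ⟨s, hTs, hs, -⟩ := aux_ex m hm 0 0 0 0
    obtain ⟨a, hTa, ha, has, -⟩ := aux_ex m hm 0 s s s
    obtain ⟨b, hTb, hb, hbs, hba, hbas⟩ := aux_ex m hm 0 s a (s + a)
    have h1 := h a s hs ha has hTs hTa
    have h2 := h b s hs hb hbs hTs hTb
    have h3 := h (b + a) s hs (fun h => hba (CharTwo.add_eq_zero.1 h))
      (fun h => hbas (by rw [← h, add_assoc, CharTwo.add_self_eq_zero, add_zero]))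
      hTs (by rw [aux_add, hTa, hTb, add_zero])
    rw [CharTwo.add_sq, add_div, aux_add, h1, h2] at h3
    revert h3
    decide
  have B : ∃ x, x ≠ 0 ∧ x ≠ c ∧ Tr m (d * (x⁻¹ + (x + c)⁻¹)) = 1 := by
    by_contra hcon
    have h := aux_main m _ he 0 (aux_red m hm c d hc 0 (fun x h0 h1 =>
      (z _).resolve_right (fun h2 => hcon ⟨x, h0, h1, h2⟩)))
    obtain ⟨s, hTs, hs, hs1, -⟩ := aux_ex m hm 0 1 1 1
    obtain ⟨r, hr⟩ := (FiniteField.isSquare_of_char_two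
      (ringChar.eq (GaloisField 2 m) 2) s⁻¹)
    rcases aux_nd m r (fun a hTa => by
      rw [← aux_sq, mul_pow, pow_two r, ← hr, ← div_eq_mul_inv]
      by_cases ha : a = 0
      · simp [ha, Tr]
      by_cases has : a = s
      · rw [has, pow_two, mul_div_assoc, div_self hs, mul_one, hTs]
      exact h a s hs ha has hTs hTa) with h0 | h0
    · rw [h0, mul_zero] at hr
      exact hs (inv_eq_zero.1 hr)
    · rw [h0, mul_one] at hr
      exact hs1 (inv_eq_one.1 hr)
  obtain ⟨x, h1, h2, h3⟩ := A
  obtain ⟨y, h4, h5, h6⟩ := B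
  exact ⟨x, y, h1, h2, h4, h5, h3, h6⟩
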